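/- Let Ŵ : ℝ → (0,∞) be a bounded, positive C¹ function satisfying (J∗Ŵ)(ξ) + c₀*Ŵ'(ξ) + (γ₀ − 1)Ŵ(ξ) + 𝒥(ξ) = 0 for all sufficiently large ξ, where 𝒥 = 𝒥₁ + 𝒥₂ with 𝒥₁(ξ) = o(Ŵ(ξ)) as ξ → +∞, and there exist constants κ₁ ≥ κ₂ > 0 and ξ̄ ∈ ℝ such that κ₂ e^{−2λ₀ξ} ≤ 𝒥₂(ξ) ≤ κ₁ e^{−2λ₀ξ} for all ξ ≥ ξ̄. Then 𝒥₂(ξ) = o(Ŵ(ξ)) as ξ → +∞ (and consequently 𝒥(ξ) = o(Ŵ(ξ)) as ξ → +∞). -/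

import Mathlib

open Filter Asymptotics MeasureTheory Set

noncomputable section

/-- A continuous, nonnegative, even, compactly supported dispersal kernel of total mass 1. -/
def IsKernel (J : ℝ → ℝ) : Prop :=
  Continuous J ∧ (∀ x, 0 ≤ J x) ∧ (∀ x, J (-x) = J x) ∧
  HasCompactSupport J ∧ (∫ x, J x) = 1

/-- The linearized minimal speed `c₀* = inf_{λ>0} (∫ J(x)e^{λx}dx + γ₀ - 1)/λ`. -/
noncomputable def c0star (J : ℝ → ℝ) (γ₀ : ℝ) : ℝ :=
  sInf ((fun l : ℝ => ((∫ x, J x * Real.exp (l * x)) + γ₀ - 1) / l) '' Ioi 0)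

theorem aux_abs_deriv_le {f : ℝ → ℝ} {d x e A : ℝ} (hA : A < x) (hd : HasDerivAt f d x)
    (h : ∀ y, A ≤ y → f x - e * |y - x| ≤ f y) : |d| ≤ e := by
  have hs := hasDerivAt_iff_tendsto_slope.1 hd
  rw [abs_le]
  constructor
  · have h1 : Tendsto (slope f x) (nhdsWithin x (Ioi x)) (nhds d) :=
      hs.mono_left (nhdsWithin_mono x (fun y hy => ne_of_gt hy))
    refine ge_of_tendsto h1 ?_
    filter_upwards [self_mem_nhdsWithin] with y hy
    have hy' : x < y := hy
    have := h y (by linarith)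
    rw [abs_of_pos (by linarith)] at this
    rw [slope_def_field, le_div_iff₀ (by linarith)]
    linarith
  · have h1 : Tendsto (slope f x) (nhdsWithin x (Iio x)) (nhds d) :=
      hs.mono_left (nhdsWithin_mono x (fun y hy => ne_of_lt hy))
    refine le_of_tendsto h1 ?_
    have hm : Ioi A ∈ nhdsWithin x (Iio x) := mem_nhdsWithin_of_mem_nhds (Ioi_mem_nhds hA)
    filter_upwards [self_mem_nhdsWithin, hm] with y hy hyA
    have hy' : y < x := hy
    have := h y (le_of_lt hyA)
    rw [abs_of_neg (by linarith)] at this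
    rw [slope_def_field, div_le_iff_of_neg (by linarith)]
    linarith

theorem aux_int {J g : ℝ → ℝ} (hJ : IsKernel J) (hg : Continuous g) :
    Integrable (fun x => J x * g x) :=
  (hJ.1.mul hg).integrable_of_hasCompactSupport hJ.2.2.2.1.mul_right

theorem aux_one_le {J : ℝ → ℝ} (hJ : IsKernel J) (l : ℝ) :
    1 ≤ ∫ x, J x * Real.exp (l * x) := by
  have hodd : (∫ x, J x * x) = 0 := by
    have h := integral_neg_eq_self (fun x => J x * x) (volume : Measure ℝ)
    have h2 : (∫ x, J (-x) * (-x)) = - ∫ x, J x * x := by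
      rw [← integral_neg]
      congr 1
      ext x
      rw [hJ.2.2.1]
      ring
    linarith
  have h1 : (∫ x, (J x + l * (J x * x))) = 1 := by
    rw [integral_add, integral_const_mul, hodd, hJ.2.2.2.2]
    · ring
    · simpa using aux_int hJ (continuous_const (y := (1:ℝ)))
    · exact (aux_int hJ continuous_id).const_mul l
  rw [← h1]
  apply integral_mono
  · exact Integrable.add (by simpa using aux_int hJ (continuous_const (y := (1:ℝ))))
      ((aux_int hJ continuous_id).const_mul l)
  · exact aux_int hJ (by fun_prop)
  · intro x
    have := mul_le_mul_of_nonneg_left (Real.add_one_le_exp (l * x)) (hJ.2.1 x)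
    simp only
    linarith

theorem aux_c_le {J : ℝ → ℝ} (hJ : IsKernel J) {γ₀ : ℝ} (hγ₀ : 0 < γ₀) {l : ℝ} (hl : 0 < l) :
    c0star J γ₀ * l ≤ (∫ x, J x * Real.exp (l * x)) - 1 + γ₀ := by
  have : c0star J γ₀ ≤ ((∫ x, J x * Real.exp (l * x)) + γ₀ - 1) / l := by
    refine csInf_le ⟨0, ?_⟩ ⟨l, hl, rfl⟩
    rintro _ ⟨m, hm, rfl⟩
    have := aux_one_le hJ m
    exact div_nonneg (by linarith) (le_of_lt hm)
  rw [le_div_iff₀ hl] at this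
  linarith

theorem aux_exists_min {U : ℝ → ℝ} (hU : Continuous U) (hpos : ∀ x, 0 < U x) {e A B : ℝ}
    (he : 0 < e) (hAB : A ≤ B) :
    ∃ x, A ≤ x ∧ ∀ y, A ≤ y → U x + e * |x - B| ≤ U y + e * |y - B| := by
  have hc : Continuous (fun x => U x + e * |x - B|) := by fun_prop
  obtain ⟨x, hx, hm⟩ := hc.continuousOn.exists_isMinOn' (s := Ici A) isClosed_Ici
    (x₀ := B) hAB (by
      refine Filter.Eventually.filter_mono inf_le_left ?_
      filter_upwards [(isCompact_closedBall B (U B / e)).compl_mem_cocompact] with y hy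
      have hy' : U B / e < |y - B| := by
        simpa [Metric.mem_closedBall, Real.dist_eq] using hy
      rw [div_lt_iff₀ he] at hy'
      have := hpos y
      simp only [sub_self, abs_zero, mul_zero, add_zero]
      linarith)
  exact ⟨x, hx, fun y hy => hm hy⟩

/-- If a bounded positive `C¹` function `Ŵ` solves, for all large `ξ`,
`J∗Ŵ + c₀*Ŵ' + (γ₀-1)Ŵ + 𝒥 = 0` with `𝒥 = 𝒥₁ + 𝒥₂`, `𝒥₁ = o(Ŵ)` and
`κ₂ e^{-2λ₀ξ} ≤ 𝒥₂(ξ) ≤ κ₁ e^{-2λ₀ξ}` for large `ξ`, then `𝒥₂ = o(Ŵ)`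
(hence `𝒥 = o(Ŵ)`) as `ξ → +∞`. -/
theorem littleo_of_forcing_nonlocal
    (J : ℝ → ℝ) (hJ : IsKernel J) (hJne : ∃ x, J x ≠ 0)
    (γ₀ : ℝ) (hγ₀ : 0 < γ₀)
    -- λ₀ is the unique positive number with ∫ J e^{λ₀ x} dx - 1 + γ₀ = c₀* λ₀
    (lam₀ : ℝ) (hlam₀ : 0 < lam₀)
    (hroot : (∫ x, J x * Real.exp (lam₀ * x)) - 1 + γ₀ = c0star J γ₀ * lam₀)
    (huniqroot : ∀ l, 0 < l →
      (∫ x, J x * Real.exp (l * x)) - 1 + γ₀ = c0star J γ₀ * l → l = lam₀)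
    (W J1 J2 : ℝ → ℝ)
    (hW1 : ContDiff ℝ 1 W) (hWpos : ∀ ξ, 0 < W ξ) (hWbdd : ∃ M, ∀ ξ, W ξ ≤ M)
    (hJ1c : Continuous J1) (hJ2c : Continuous J2)
    (heq : ∃ Ξ : ℝ, ∀ ξ, Ξ ≤ ξ →
      (∫ y, J (ξ - y) * W y) + c0star J γ₀ * deriv W ξ + (γ₀ - 1) * W ξ +
        (J1 ξ + J2 ξ) = 0)
    (hJ1o : Tendsto (fun ξ => J1 ξ / W ξ) atTop (nhds 0))
    (κ₁ κ₂ ξb : ℝ) (hκ₂ : 0 < κ₂) (hκ : κ₂ ≤ κ₁)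
    (hJ2b : ∀ ξ, ξb ≤ ξ →
      κ₂ * Real.exp (-(2 * lam₀ * ξ)) ≤ J2 ξ ∧ J2 ξ ≤ κ₁ * Real.exp (-(2 * lam₀ * ξ))) :
    Tendsto (fun ξ => J2 ξ / W ξ) atTop (nhds 0) ∧
    Tendsto (fun ξ => (J1 ξ + J2 ξ) / W ξ) atTop (nhds 0) := by
  obtain ⟨Ξ, heq⟩ := heq
  set c := c0star J γ₀ with hc
  set k := ∫ x, J x * Real.exp (2 * lam₀ * x) with hk
  have hδ : 0 < k - 1 + γ₀ - c * (2 * lam₀) := by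
    have h1 := aux_c_le hJ hγ₀ (l := 2 * lam₀) (by linarith)
    rcases h1.lt_or_eq with h | h
    · linarith
    · have := huniqroot (2 * lam₀) (by linarith) h.symm
      linarith
  set δ := k - 1 + γ₀ - c * (2 * lam₀) with hδdef
  have hk1 : 1 ≤ k := aux_one_le hJ _
  obtain ⟨R, hR, hsupp⟩ : ∃ R : ℝ, 0 < R ∧ ∀ z, R < |z| → J z = 0 := by
    obtain ⟨R, hR⟩ := hJ.2.2.2.1.isCompact.isBounded.subset_closedBall (0:ℝ)
    refine ⟨max R 1, by positivity, fun z hz => ?_⟩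
    by_contra hne
    have := hR (subset_tsupport _ hne)
    rw [mem_closedBall_zero_iff, Real.norm_eq_abs] at this
    have := le_max_left R 1
    linarith
  obtain ⟨X1, hX1⟩ : ∃ X1, ∀ x, X1 ≤ x → |J1 x / W x| < δ := by
    have := hJ1o.abs.eventually_lt_const (u := δ) (by simpa using hδ)
    exact eventually_atTop.1 this
  set U : ℝ → ℝ := fun x => W x * Real.exp (2 * lam₀ * x) with hUdef
  have hWc : Continuous W := hW1.continuous
  have hUc : Continuous U := by fun_prop
  have hUpos : ∀ x, 0 < U x := fun x => mul_pos (hWpos x) (Real.exp_pos _)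
  obtain ⟨e, he, hesmall⟩ : ∃ e : ℝ, 0 < e ∧ e * (k * R + |c|) < κ₂ := by
    have hp : 0 < k * R + |c| := by positivity
    refine ⟨κ₂ / (2 * (k * R + |c|)), by positivity, ?_⟩
    rw [div_mul_eq_mul_div, div_lt_iff₀ (by positivity)]
    nlinarith [mul_pos hκ₂ hp]
  set A := max (max Ξ X1) ξb with hA
  have hAΞ : Ξ ≤ A := le_trans (le_max_left _ _) (le_max_left _ _)
  have hAX : X1 ≤ A := le_trans (le_max_right _ _) (le_max_left _ _)
  have hAb : ξb ≤ A := le_max_right _ _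
  have key : ∀ B, A ≤ B → e * (B - A - R) ≤ U B := by
    intro B hB
    obtain ⟨x, hAx, hmin⟩ := aux_exists_min hUc hUpos he hB
    by_cases hxR : x < A + R
    · have h1 := hmin B hB
      simp only [sub_self, abs_zero, mul_zero, add_zero] at h1
      have h2 := hUpos x
      have h3 : B - A - R ≤ |x - B| := by
        rw [abs_sub_comm]
        exact le_trans (by linarith) (le_abs_self _)
      have := mul_le_mul_of_nonneg_left h3 he.le
      linarith
    exfalso
    push Not at hxR
    have hlow : ∀ y, A ≤ y → U x - e * |y - x| ≤ U y := by
      intro y hy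
      have h1 := hmin y hy
      have h2 : |y - B| ≤ |y - x| + |x - B| := abs_sub_le _ _ _
      have := mul_le_mul_of_nonneg_left h2 he.le
      linarith
    have hWd : HasDerivAt W (deriv W x) x :=
      (hW1.differentiable (by norm_num)).differentiableAt.hasDerivAt
    have hEd : HasDerivAt (fun x => Real.exp (2 * lam₀ * x))
        (Real.exp (2 * lam₀ * x) * (2 * lam₀)) x := by
      simpa using ((hasDerivAt_id x).const_mul (2 * lam₀)).exp
    have hUd : HasDerivAt U (deriv W x * Real.exp (2 * lam₀ * x) +
        W x * (Real.exp (2 * lam₀ * x) * (2 * lam₀))) x := hWd.mul hEd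
    have hder := aux_abs_deriv_le (by linarith) hUd hlow
    set D := deriv W x * Real.exp (2 * lam₀ * x) +
        W x * (Real.exp (2 * lam₀ * x) * (2 * lam₀)) with hD
    have hcD : -(|c| * e) ≤ c * D := by
      have h1 : |c * D| ≤ |c| * e := by
        rw [abs_mul]
        exact mul_le_mul_of_nonneg_left hder (abs_nonneg _)
      exact (abs_le.1 h1).1
    have hconv : k * (U x - e * R) ≤
        (∫ y, J (x - y) * W y) * Real.exp (2 * lam₀ * x) := by
      have e1 : (∫ y, J (x - y) * W y) = ∫ z, J z * W (x - z) := by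
        have := integral_sub_left_eq_self (fun z => J z * W (x - z)) (volume : Measure ℝ) x
        simpa using this
      rw [e1, hk, ← integral_mul_const, ← integral_mul_const]
      apply integral_mono
      · exact (aux_int hJ (by fun_prop)).mul_const _
      · exact (aux_int hJ (by fun_prop)).mul_const _
      · intro z
        simp only
        by_cases hz : R < |z|
        · simp [hsupp z hz]
        push Not at hz
        have hz' := abs_le.1 hz
        have h1 := hlow (x - z) (by linarith)
        have h2 : |x - z - x| = |z| := by
          rw [show x - z - x = -z by ring, abs_neg]
        rw [h2] at h1
        have h3 : U x - e * R ≤ U (x - z) := by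
          have := mul_le_mul_of_nonneg_left hz he.le
          linarith
        have h4 : 0 ≤ J z * Real.exp (2 * lam₀ * z) :=
          mul_nonneg (hJ.2.1 z) (Real.exp_pos _).le
        have h5 := mul_le_mul_of_nonneg_left h3 h4
        have h6 : Real.exp (2 * lam₀ * x) =
            Real.exp (2 * lam₀ * z) * Real.exp (2 * lam₀ * (x - z)) := by
          rw [← Real.exp_add]
          congr 1
          ring
        calc _ ≤ _ := h5
          _ = _ := by
            rw [h6]
            simp only [hUdef]
            ring
    have hJ1 : -(δ * U x) ≤ J1 x * Real.exp (2 * lam₀ * x) := by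
      have h1 := (abs_lt.1 (hX1 x (by linarith))).1
      rw [lt_div_iff₀ (hWpos x)] at h1
      have := mul_le_mul_of_nonneg_right h1.le (Real.exp_pos (2 * lam₀ * x)).le
      simp only [hUdef]
      linarith
    have hJ2 : κ₂ ≤ J2 x * Real.exp (2 * lam₀ * x) := by
      have h1 := (hJ2b x (by linarith)).1
      have := mul_le_mul_of_nonneg_right h1 (Real.exp_pos (2 * lam₀ * x)).le
      rwa [mul_assoc, ← Real.exp_add, neg_add_cancel, Real.exp_zero, mul_one] at this
    have hE := congrArg (fun t => t * Real.exp (2 * lam₀ * x)) (heq x (by linarith))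
    simp only [zero_mul] at hE
    have hfin : (∫ y, J (x - y) * W y) * Real.exp (2 * lam₀ * x) + c * D
        - c * (2 * lam₀) * U x + (γ₀ - 1) * U x + J1 x * Real.exp (2 * lam₀ * x)
        + J2 x * Real.exp (2 * lam₀ * x) = 0 := by
      rw [← hE, hD]
      simp only [hUdef]
      ring
    have hδU : δ * U x = k * U x - U x + γ₀ * U x - c * (2 * lam₀) * U x := by
      rw [hδdef]
      ring
    linarith
  have hUtop : Tendsto U atTop atTop := by
    have h1 : Tendsto (fun B : ℝ => e * (B - A - R)) atTop atTop := by
      apply Tendsto.const_mul_atTop he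
      simp only [sub_eq_add_neg]
      exact tendsto_atTop_add_const_right _ _ (tendsto_atTop_add_const_right _ _ tendsto_id)
    exact tendsto_atTop_mono' _ (eventually_atTop.2 ⟨A, key⟩) h1
  have hJ2o : Tendsto (fun ξ => J2 ξ / W ξ) atTop (nhds 0) := by
    have hup : Tendsto (fun ξ => κ₁ / U ξ) atTop (nhds 0) := hUtop.const_div_atTop κ₁
    refine tendsto_of_tendsto_of_tendsto_of_le_of_le' tendsto_const_nhds hup ?_ ?_
    · filter_upwards [eventually_ge_atTop ξb] with x hx
      refine div_nonneg (le_trans ?_ (hJ2b x hx).1) (hWpos x).le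
      positivity
    · filter_upwards [eventually_ge_atTop ξb] with x hx
      rw [div_le_div_iff₀ (hWpos x) (hUpos x)]
      have h1 := mul_le_mul_of_nonneg_right (hJ2b x hx).2 (hUpos x).le
      refine h1.trans (le_of_eq ?_)
      simp only [hUdef]
      rw [Real.exp_neg]
      field_simp
  refine ⟨hJ2o, ?_⟩
  have := hJ1o.add hJ2o
  simpa only [add_div, add_zero] using this
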